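/- Let m ≥ 2 be an integer and let p be a real number with 2m ≤ p < ∞. If D > 0 is such that for every n ≥ 1 and every m-homogeneous polynomial P(x) = ∑_{|α|=m} a_α x^α on the real space ℓ_p^n one has (∑_{|α|=m} |a_α|^{2mp/(mp+p−2m)})^{(mp+p−2m)/(2mp)} ≤ D·‖P‖, then (2^{1/16})^m ≤ 2^{((mp+p−6m+4)/(4p))·((m−1)/m)} ≤ D. -/

import Mathlib

open Finset

/-- The `ℓ_p` norm on `ℝ^n` for a real exponent `p`. -/
noncomputable def lpNorm {n : ℕ} (p : ℝ) (x : Fin n → ℝ) : ℝ :=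
  (∑ i, |x i| ^ p) ^ (1 / p)

/-- The sup norm of the `m`-homogeneous polynomial with coefficients `a`
over the unit ball of the real space `ℓ_p^n`. -/
noncomputable def polyNorm (p : ℝ) (m n : ℕ) (a : (Fin n → ℕ) → ℝ) : ℝ :=
  sSup {y : ℝ | ∃ x : Fin n → ℝ, lpNorm p x ≤ 1 ∧
    y = |∑ α ∈ Finset.Nat.antidiagonalTuple n m, a α * ∏ i, x i ^ α i|}


/-- Coefficients of `x^e (x^2 - y^2)^k`. -/
noncomputable def hlCoef (k : ℕ) (α : Fin 2 → ℕ) : ℝ :=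
  if Even (α 1) then (-1) ^ (α 1 / 2) * (k.choose (α 1 / 2) : ℝ) else 0

lemma hlCoef_even (k a j : ℕ) : hlCoef k ![a, 2 * j] = (-1) ^ j * (k.choose j : ℝ) := by
  unfold hlCoef
  have h1 : (![a, 2 * j] : Fin 2 → ℕ) 1 = 2 * j := rfl
  rw [if_pos (by rw [h1]; simp), h1, Nat.mul_div_cancel_left _ (by norm_num)]

lemma hl_sum_range (k : ℕ) (g : ℕ → ℝ) (hg : ∀ i, ¬ Even i → g i = 0) :
    ∑ i ∈ Finset.range (2 * k + 1), g i = ∑ j ∈ Finset.range (k + 1), g (2 * j) := by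
  induction k with
  | zero => simp
  | succ k ih =>
    rw [Finset.sum_range_succ _ (k + 1), ← ih]
    rw [show 2 * (k + 1) + 1 = 2 * k + 1 + 1 + 1 by ring, Finset.sum_range_succ,
      Finset.sum_range_succ, hg (2 * k + 1) (by simp)]
    simp [show 2 * (k + 1) = 2 * k + 1 + 1 by ring]

lemma hl_sum (k e m : ℕ) (he : e ≤ 1) (hm : m = 2 * k + e) (f : (Fin 2 → ℕ) → ℝ)
    (hf : ∀ α, ¬ Even (α 1) → f α = 0) :
    ∑ α ∈ Finset.Nat.antidiagonalTuple 2 m, f α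
      = ∑ j ∈ Finset.range (k + 1), f ![2 * (k - j) + e, 2 * j] := by
  rw [Finset.Nat.antidiagonalTuple_two, Finset.sum_map]
  have h1 := Finset.Nat.sum_antidiagonal_eq_sum_range_succ (fun i j => f ![i, j]) m
  have h2 := Finset.sum_range_reflect (fun i => f ![i, m - i]) (m + 1)
  have h3 : ∑ α ∈ antidiagonal m, f ![α.1, α.2] = ∑ i ∈ Finset.range (m + 1), f ![m - i, i] := by
    rw [h1, ← h2]
    apply Finset.sum_congr rfl
    intro i hi
    rw [Finset.mem_range] at hi
    have e1 : m + 1 - 1 - i = m - i := by omega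
    have e2 : m - (m - i) = i := by omega
    simp only [e1, e2]
  have h4 : ∑ i ∈ Finset.range (m + 1), f ![m - i, i]
      = ∑ i ∈ Finset.range (2 * k + 1), f ![m - i, i] := by
    subst hm
    interval_cases e
    · rfl
    · rw [Finset.sum_range_succ, hf _ (by simp), add_zero]
  refine Eq.trans ?_ (h3.trans (h4.trans ((hl_sum_range k _ ?_).trans ?_)))
  · apply Finset.sum_congr rfl
    intro i _
    rfl
  · intro i hi
    exact hf _ (by simpa using hi)
  · apply Finset.sum_congr rfl
    intro j hj
    rw [Finset.mem_range] at hj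
    congr 2
    omega

lemma hl_poly (k e m : ℕ) (he : e ≤ 1) (hm : m = 2 * k + e) (x : Fin 2 → ℝ) :
    ∑ α ∈ Finset.Nat.antidiagonalTuple 2 m, hlCoef k α * ∏ i, x i ^ α i
      = x 0 ^ e * (x 0 ^ 2 - x 1 ^ 2) ^ k := by
  rw [hl_sum k e m he hm _ (by intro α hα; simp [hlCoef, hα])]
  have : x 0 ^ 2 - x 1 ^ 2 = (- x 1 ^ 2) + x 0 ^ 2 := by ring
  rw [this, add_pow, Finset.mul_sum]
  apply Finset.sum_congr rfl
  intro j _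
  rw [hlCoef_even, Fin.prod_univ_two]
  simp only [Matrix.cons_val_zero, Matrix.cons_val_one]
  rw [neg_pow (x 1 ^ 2) j, pow_add,
    pow_mul, pow_mul]
  ring

lemma hl_norm (k e m : ℕ) (he : e ≤ 1) (hm : m = 2 * k + e) (p : ℝ) (hp : 0 < p) :
    polyNorm p m 2 (hlCoef k) ≤ 1 := by
  unfold polyNorm
  apply Real.sSup_le _ zero_le_one
  rintro y ⟨x, hx, rfl⟩
  rw [hl_poly k e m he hm]
  have hS : ∑ i, |x i| ^ p ≤ 1 := by
    by_contra hc
    push Not at hc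
    have := Real.one_lt_rpow hc (show 0 < 1 / p by positivity)
    unfold lpNorm at hx
    linarith
  have hx1 : ∀ i, |x i| ≤ 1 := by
    intro i
    by_contra hc
    push Not at hc
    have h1 := Real.one_lt_rpow hc hp
    have h2 := Finset.single_le_sum (f := fun i => |x i| ^ p)
      (fun i _ => Real.rpow_nonneg (abs_nonneg _) p) (Finset.mem_univ i)
    linarith
  rw [abs_mul, abs_pow, abs_pow]
  have a0 : x 0 ^ 2 ≤ 1 := (sq_le_one_iff_abs_le_one _).2 (hx1 0)
  have a1 : x 1 ^ 2 ≤ 1 := (sq_le_one_iff_abs_le_one _).2 (hx1 1)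
  have a2 : |x 0 ^ 2 - x 1 ^ 2| ≤ 1 := by
    rw [abs_le]; constructor <;> nlinarith [sq_nonneg (x 0), sq_nonneg (x 1)]
  exact mul_le_one₀ (pow_le_one₀ (abs_nonneg _) (hx1 0)) (by positivity)
    (pow_le_one₀ (abs_nonneg _) a2)

lemma hl_central (k : ℕ) (hk : 2 ≤ k) : 2 ^ (2 * k + 1) ≤ (2 * k).choose k ^ 2 := by
  change _ ≤ Nat.centralBinom k ^ 2
  induction k, hk using Nat.le_induction with
  | base => decide
  | succ k hk ih =>
    have h := Nat.succ_mul_centralBinom_succ k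
    have h2 : 2 * Nat.centralBinom k ≤ Nat.centralBinom (k + 1) := by
      have : (k + 1) * (2 * Nat.centralBinom k) ≤ (k + 1) * Nat.centralBinom (k + 1) := by
        rw [h]; nlinarith [Nat.zero_le (Nat.centralBinom k)]
      exact Nat.le_of_mul_le_mul_left this (by omega)
    calc 2 ^ (2 * (k + 1) + 1) = 4 * 2 ^ (2 * k + 1) := by ring
      _ ≤ 4 * Nat.centralBinom k ^ 2 := by omega
      _ = (2 * Nat.centralBinom k) ^ 2 := by ring
      _ ≤ _ := Nat.pow_le_pow_left h2 2

lemma hl_l2 {ι : Type*} (S : Finset ι) (a : ι → ℝ) (s D : ℝ) (hs : 0 < s) (hs2 : s ≤ 2)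
    (hD : 0 < D) (h : (∑ i ∈ S, |a i| ^ s) ^ (1 / s) ≤ D) : ∑ i ∈ S, a i ^ 2 ≤ D ^ 2 := by
  have hnn : 0 ≤ ∑ i ∈ S, |a i| ^ s :=
    Finset.sum_nonneg fun i _ => Real.rpow_nonneg (abs_nonneg _) s
  have hs' : ∑ i ∈ S, |a i| ^ s ≤ D ^ s := by
    have := Real.rpow_le_rpow (by positivity) h hs.le
    rwa [← Real.rpow_mul hnn, one_div_mul_cancel hs.ne', Real.rpow_one] at this
  have hi : ∀ i ∈ S, |a i| ≤ D := by
    intro i hi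
    have h2 := Finset.single_le_sum (f := fun i => |a i| ^ s)
      (fun i _ => Real.rpow_nonneg (abs_nonneg _) s) hi
    exact (Real.rpow_le_rpow_iff (abs_nonneg _) hD.le hs).1 (h2.trans hs')
  have key : ∀ i ∈ S, a i ^ 2 ≤ |a i| ^ s * D ^ (2 - s) := by
    intro i hiS
    have e1 : a i ^ 2 = |a i| ^ s * |a i| ^ (2 - s) := by
      rw [← Real.rpow_add_of_nonneg (abs_nonneg _) hs.le (by linarith)]
      rw [show s + (2 - s) = ((2 : ℕ) : ℝ) by push_cast; ring, Real.rpow_natCast, sq_abs]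
    rw [e1]
    exact mul_le_mul_of_nonneg_left (Real.rpow_le_rpow (abs_nonneg _) (hi i hiS) (by linarith))
      (Real.rpow_nonneg (abs_nonneg _) s)
  calc ∑ i ∈ S, a i ^ 2 ≤ ∑ i ∈ S, |a i| ^ s * D ^ (2 - s) := Finset.sum_le_sum key
    _ = (∑ i ∈ S, |a i| ^ s) * D ^ (2 - s) := by rw [Finset.sum_mul]
    _ ≤ D ^ s * D ^ (2 - s) := by gcongr
    _ = D ^ 2 := by
      rw [← Real.rpow_add hD, show s + (2 - s) = ((2 : ℕ) : ℝ) by push_cast; ring,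
        Real.rpow_natCast]

lemma hl_sq (k e m : ℕ) (he : e ≤ 1) (hm : m = 2 * k + e) :
    ∑ α ∈ Finset.Nat.antidiagonalTuple 2 m, hlCoef k α ^ 2 = ((2 * k).choose k : ℝ) := by
  rw [hl_sum k e m he hm _ (by intro α hα; simp [hlCoef, hα]), ← Nat.sum_range_choose_sq]
  push_cast
  apply Finset.sum_congr rfl
  intro j _
  rw [hlCoef_even, mul_pow, ← pow_mul, mul_comm j 2,
    pow_mul]
  norm_num

/-- For `m ≥ 2` and `2m ≤ p < ∞`, any constant `D` for the real polynomial
Hardy–Littlewood inequality satisfies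
`(2^{1/16})^m ≤ 2^{((mp+p-6m+4)/(4p))·((m-1)/m)} ≤ D`. -/
theorem real_HL_lower_bound (m : ℕ) (hm : 2 ≤ m)
    (p : ℝ) (hp : 2 * (m : ℝ) ≤ p) (D : ℝ) (hD : 0 < D)
    (h : ∀ n : ℕ, 1 ≤ n → ∀ a : (Fin n → ℕ) → ℝ,
      (∑ α ∈ Finset.Nat.antidiagonalTuple n m, |a α|
          ^ (2 * (m : ℝ) * p / ((m : ℝ) * p + p - 2 * m)))
        ^ (((m : ℝ) * p + p - 2 * m) / (2 * (m : ℝ) * p)) ≤ D * polyNorm p m n a) :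
    ((2 : ℝ) ^ ((1 : ℝ) / 16)) ^ (m : ℕ) ≤
        2 ^ ((((m : ℝ) * p + p - 6 * m + 4) / (4 * p)) * (((m : ℝ) - 1) / m)) ∧
      2 ^ ((((m : ℝ) * p + p - 6 * m + 4) / (4 * p)) * (((m : ℝ) - 1) / m)) ≤ D := by
  have hm' : (2 : ℝ) ≤ m := by exact_mod_cast hm
  have hp0 : 0 < p := by linarith
  have hm0 : (0 : ℝ) < m := by linarith
  constructor
  · rw [← Real.rpow_natCast, ← Real.rpow_mul (by norm_num)]
    apply Real.rpow_le_rpow_of_exponent_le (by norm_num)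
    rw [div_mul_div_comm, div_mul_eq_mul_div, one_mul, div_le_div_iff₀ (by norm_num) (by positivity)]
    have h1 : (m : ℝ) ^ 3 ≤ 4 * ((m : ℝ) ^ 2 - 2 * m + 2) * (m - 1) := by
      obtain ⟨t, ht⟩ : ∃ t : ℝ, (m : ℝ) = 2 + t := ⟨m - 2, by ring⟩
      have ht0 : 0 ≤ t := by linarith
      rw [ht]
      have : 0 ≤ t ^ 3 := by positivity
      nlinarith [sq_nonneg t]
    obtain ⟨q, hq⟩ : ∃ q : ℝ, p = 2 * m + q := ⟨p - 2 * m, by ring⟩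
    have hq0 : 0 ≤ q := by linarith
    have h2 : 0 ≤ 4 * ((m : ℝ) ^ 2 - 1) - m ^ 2 := by nlinarith
    rw [hq]
    nlinarith [mul_nonneg hq0 h2]
  · have hd : 0 < (m : ℝ) * p + p - 2 * m := by nlinarith
    set s : ℝ := 2 * (m : ℝ) * p / ((m : ℝ) * p + p - 2 * m) with hsdef
    have hs : 0 < s := by positivity
    have hs2 : s ≤ 2 := by
      rw [hsdef, div_le_iff₀ hd]; nlinarith
    have hinv : ((m : ℝ) * p + p - 2 * m) / (2 * (m : ℝ) * p) = 1 / s := by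
      rw [hsdef, one_div_div]
    rw [hinv] at h
    obtain ⟨k, e, he, hke⟩ : ∃ k e, e ≤ 1 ∧ m = 2 * k + e :=
      ⟨m / 2, m % 2, by omega, by omega⟩
    have hmain : (∑ α ∈ Finset.Nat.antidiagonalTuple 2 m, |hlCoef k α| ^ s) ^ (1 / s) ≤ D := by
      have h1 := h 2 (by norm_num) (hlCoef k)
      have h2 := hl_norm k e m he hke p hp0
      nlinarith
    by_cases h3 : m = 3
    · obtain rfl : k = 1 := by omega
      obtain rfl : e = 1 := by omega
      rw [hl_sum 1 1 m le_rfl hke _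
        (by intro α hα; simp [hlCoef, hα, Real.zero_rpow hs.ne'])] at hmain
      simp only [hlCoef_even] at hmain
      simp [Finset.sum_range_succ] at hmain
      refine le_trans ?_ hmain
      rw [one_add_one_eq_two]
      apply Real.rpow_le_rpow_of_exponent_le (by norm_num)
      rw [← one_div, ← hinv, h3, div_mul_div_comm, div_le_div_iff₀ (by positivity) (by positivity)]
      push_cast
      nlinarith
    · have hsq := hl_l2 _ _ s D hs hs2 hD hmain
      rw [hl_sq k e m he hke] at hsq
      have hC : 2 ^ m ≤ (2 * k).choose k ^ 2 := by
        by_cases hk : k = 1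
        · subst hk
          obtain rfl : e = 0 := by omega
          subst hke
          decide
        · refine le_trans (Nat.pow_le_pow_right (by norm_num) ?_) (hl_central k (by omega))
          omega
      have hC' : (2 : ℝ) ^ m ≤ ((2 * k).choose k : ℝ) ^ 2 := by exact_mod_cast hC
      have hD4 : (2 : ℝ) ^ m ≤ D ^ 4 := by
        calc (2 : ℝ) ^ m ≤ ((2 * k).choose k : ℝ) ^ 2 := hC'
          _ ≤ (D ^ 2) ^ 2 := by gcongr
          _ = D ^ 4 := by ring
      have hDm : (2 : ℝ) ^ ((m : ℝ) / 4) ≤ D := by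
        apply le_of_pow_le_pow_left₀ (n := 4) (by norm_num) hD.le
        rw [← Real.rpow_natCast, ← Real.rpow_mul (by norm_num)]
        push_cast
        rw [div_mul_cancel₀ _ (by norm_num), Real.rpow_natCast]
        exact hD4
      refine le_trans ?_ hDm
      apply Real.rpow_le_rpow_of_exponent_le (by norm_num)
      rw [div_mul_div_comm, div_le_div_iff₀ (by positivity) (by norm_num)]
      have h6 : 0 ≤ (6 * (m : ℝ) - 4) * (m - 1) := by
        apply mul_nonneg <;> linarith
      nlinarith
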